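/- arXiv:2603.26484 — 3 statements merged into one kernel-verified Lean document; each statement's English description precedes it below -/
import Mathlib

section
/- If a computably approximable real is neither left-c.e. nor right-c.e., then it is fully c.a. speedable, i.e., every computable approximation of it is speedable. -/
open Filter

/-- A computable approximation of a real `α`: a computable sequence of
rationals in `[0,1]` converging to `α`. -/
def IsCompApprox (a : ℕ → ℚ) (α : ℝ) : Prop :=
  Computable a ∧ (∀ s, a s ∈ Set.Icc (0 : ℚ) 1) ∧
    Tendsto (fun s => (a s : ℝ)) atTop (nhds α)

/-- A d.c.e. approximation: a computable approximation with bounded variation. -/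
def IsDCEApprox (a : ℕ → ℚ) (α : ℝ) : Prop :=
  IsCompApprox a α ∧ Summable (fun s => |(a (s + 1) : ℝ) - (a s : ℝ)|)

/-- A computable order: a nondecreasing unbounded computable function. -/
def IsComputableOrder (f : ℕ → ℕ) : Prop :=
  Computable f ∧ Monotone f ∧ Tendsto f atTop atTop

/-- The liminf (in the extended reals) of `|(α - a (f s)) / (α - a s)|`. -/
noncomputable def speedLiminf (a : ℕ → ℚ) (f : ℕ → ℕ) (α : ℝ) : EReal :=
  Filter.liminf (fun s => ((|(α - (a (f s) : ℝ)) / (α - (a s : ℝ))| : ℝ) : EReal)) atTop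

/-- A computable approximation `a` of `α` is `ρ`-speedable. -/
def IsRhoSpeedable (a : ℕ → ℚ) (α : ℝ) (ρ : ℚ) : Prop :=
  (∃ q : ℚ, α = (q : ℝ)) ∨
    ∃ f, IsComputableOrder f ∧ speedLiminf a f α ≤ (((ρ : ℝ) : EReal))

/-- A computable approximation is speedable if it is `ρ`-speedable for some rational
`ρ ∈ [0,1)`. -/
def IsSpeedable (a : ℕ → ℚ) (α : ℝ) : Prop :=
  ∃ ρ : ℚ, 0 ≤ ρ ∧ ρ < 1 ∧ IsRhoSpeedable a α ρ

/-- A Solovay test: computable sequences of rationals `l i ≤ r i` in `[0,1]`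
with `Σ (r i - l i) < ∞`. -/
structure SolovayTest where
  l : ℕ → ℚ
  r : ℕ → ℚ
  comp_l : Computable l
  comp_r : Computable r
  mem_l : ∀ i, l i ∈ Set.Icc (0 : ℚ) 1
  mem_r : ∀ i, r i ∈ Set.Icc (0 : ℚ) 1
  le : ∀ i, l i ≤ r i
  summable : Summable (fun i => (r i : ℝ) - (l i : ℝ))

/-- A real `γ` is covered by a Solovay test if `γ ∈ [l i, r i]` for infinitely many `i`. -/
def SolovayTest.Covers (T : SolovayTest) (γ : ℝ) : Prop :=
  ∃ᶠ i in atTop, γ ∈ Set.Icc (T.l i : ℝ) (T.r i : ℝ)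

/-- The sequence of endpoints `l 0, r 0, l 1, r 1, …` of a Solovay test. -/
def SolovayTest.endpoints (T : SolovayTest) (n : ℕ) : ℚ :=
  if n % 2 = 0 then T.l (n / 2) else T.r (n / 2)

open Encodable

noncomputable def spEE (q : ℚ) : ℕ := @encode ℚ Rat.instEncodable q

theorem spEE_eq (q : ℚ) : spEE q = Nat.pair (encode q.num) q.den := rfl
theorem sp_enc_nn (n : ℕ) : encode (n:ℤ) = 2*n := rfl
theorem sp_enc_neg (n : ℕ) : encode (Int.negSucc n) = 2*n+1 := rfl

noncomputable local instance spInst1 : DecidablePred (· ∈ Set.range spEE) :=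
  @decidableRangeEncode ℚ Rat.instEncodable
local instance spInst2 : Infinite (Set.range spEE) :=
  Infinite.of_injective _
    (Equiv.ofInjective _ (@encode_injective ℚ Rat.instEncodable)).injective

theorem spEE_ofNat (n : ℕ) :
    spEE (Denumerable.ofNat ℚ n) = (Nat.Subtype.ofNat (Set.range spEE) n : ℕ) := by
  have : Denumerable.ofNat ℚ n =
    (@equivRangeEncode ℚ Rat.instEncodable).symm (Nat.Subtype.ofNat (Set.range spEE) n) := rfl
  rw [this]
  exact congrArg Subtype.val ((@equivRangeEncode ℚ Rat.instEncodable).apply_symm_apply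
    (Nat.Subtype.ofNat (Set.range spEE) n))

def SP (k : ℕ) : Prop :=
  0 < k.unpair.2 ∧ ∀ d < k + 1, ¬ (((k.unpair.1 + 1) / 2) % d = 0 ∧ k.unpair.2 % d = 0 ∧ d ≠ 1)

theorem SP_iff (k : ℕ) : k ∈ Set.range spEE ↔ SP k := by
  have hc : ∀ c : ℕ, ∃ m : ℤ, encode m = c ∧ m.natAbs = (c + 1) / 2 := by
    intro c
    rcases Nat.even_or_odd' c with ⟨m, rfl | rfl⟩
    · exact ⟨m, sp_enc_nn m, by simp; omega⟩
    · exact ⟨Int.negSucc m, sp_enc_neg m, by simp; omega⟩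
  have hn : ∀ m : ℤ, m.natAbs = (encode m + 1) / 2 := by
    intro m
    obtain ⟨m', h1, h2⟩ := hc (encode m)
    have := encode_injective h1
    rw [← h2, this]
  constructor
  · rintro ⟨q, rfl⟩
    rw [spEE_eq, SP, Nat.unpair_pair]
    refine ⟨q.den_pos, ?_⟩
    rintro d - ⟨h1, h2, h3⟩
    simp only at h1 h2
    rw [← hn] at h1
    have := Nat.dvd_gcd (Nat.dvd_of_mod_eq_zero h1) (Nat.dvd_of_mod_eq_zero h2)
    rw [q.reduced] at this
    exact h3 (Nat.dvd_one.1 this)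
  · rintro ⟨h1, h2⟩
    obtain ⟨m, hm1, hm2⟩ := hc k.unpair.1
    have hcop : m.natAbs.Coprime k.unpair.2 := by
      by_contra h
      rw [hm2] at h
      refine h2 (Nat.gcd ((k.unpair.1 + 1) / 2) k.unpair.2) ?_ ⟨?_, ?_, h⟩
      · have := Nat.gcd_le_right ((k.unpair.1 + 1) / 2) h1
        have := Nat.unpair_right_le k
        omega
      · exact Nat.mod_eq_zero_of_dvd (Nat.gcd_dvd_left _ _)
      · exact Nat.mod_eq_zero_of_dvd (Nat.gcd_dvd_right _ _)
    refine ⟨⟨m, k.unpair.2, h1.ne', hcop⟩, ?_⟩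
    rw [spEE_eq]
    simp only [hm1, Nat.pair_unpair]

theorem SP_primrec : PrimrecPred SP := by
  unfold SP
  have hu1 : Primrec (fun k : ℕ => k.unpair.1) := Primrec.fst.comp Primrec.unpair
  have hu2 : Primrec (fun k : ℕ => k.unpair.2) := Primrec.snd.comp Primrec.unpair
  have hA : Primrec (fun k : ℕ => (k.unpair.1 + 1) / 2) :=
    Primrec.nat_div.comp (Primrec.succ.comp hu1) (Primrec.const 2)
  refine PrimrecPred.and (Primrec.nat_lt.comp (Primrec.const 0) hu2) ?_
  have hR : PrimrecRel (fun d k : ℕ =>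
      ¬ (((k.unpair.1 + 1) / 2) % d = 0 ∧ k.unpair.2 % d = 0 ∧ d ≠ 1)) := by
    refine PrimrecPred.not (PrimrecPred.and ?_ (PrimrecPred.and ?_ (PrimrecPred.not ?_)))
    · exact Primrec.eq.comp (Primrec.nat_mod.comp (hA.comp Primrec.snd) Primrec.fst)
        (Primrec.const 0)
    · exact Primrec.eq.comp (Primrec.nat_mod.comp (hu2.comp Primrec.snd) Primrec.fst)
        (Primrec.const 0)
    · exact Primrec.eq.comp Primrec.fst (Primrec.const 1)
  exact hR.forall_lt.comp Primrec.succ Primrec.id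

theorem comp_find {α : Type*} [Primcodable α] (P : α → ℕ → Bool) (hP : Computable₂ P)
    (h : ∀ a, ∃ n, P a n = true) :
    ∃ g : α → ℕ, Computable g ∧ ∀ a, P a (g a) = true ∧ ∀ m < g a, P a m = false := by
  refine ⟨fun a => Nat.find (h a), ?_, ?_⟩
  · refine (Partrec.rfind (p := fun a n => Part.some (P a n)) hP.partrec₂).of_eq_tot ?_
    intro a
    refine Nat.mem_rfind.2 ⟨?_, ?_⟩
    · simpa using (Nat.find_spec (h a)).symm
    · intro m hm
      have := Nat.find_min (h a) hm
      simp at this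
      simp [this]
  · intro a
    refine ⟨Nat.find_spec (h a), fun m hm => ?_⟩
    have := Nat.find_min (h a) hm
    simpa using this

theorem comp_EE : Computable (fun n => spEE (Denumerable.ofNat ℚ n)) := by
  classical
  obtain ⟨g, hg, hg2⟩ := comp_find (α := ℕ)
    (fun x n => decide (x ≤ n) && decide (SP n)) (by
      refine Primrec.to_comp ?_
      refine Primrec.and.comp ?_ ?_
      · exact (Primrec.nat_le.decide)
      · exact (SP_primrec.decide.comp Primrec.snd)) (by
      intro x
      obtain ⟨n, hn⟩ := (Set.infinite_coe_iff.1 spInst2).exists_gt x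
      refine ⟨n, ?_⟩
      simp [(SP_iff n).1 hn.1, hn.2.le])
  have hg3 : ∀ x, x ≤ g x ∧ SP (g x) := fun x => by simpa using (hg2 x).1
  have hg4 : ∀ x m, x ≤ m → SP m → g x ≤ m := fun x m h1 h2 => by
    by_contra h
    have := (hg2 x).2 m (by omega)
    simp [h1, h2] at this
  have hrec : Computable (fun n : ℕ => Nat.rec (motive := fun _ => ℕ) (g 0)
      (fun _ ih => g (ih + 1)) n) :=
    Computable.nat_rec (f := fun n : ℕ => n) (g := fun _ => g 0) (h := fun _ p => g (p.2 + 1))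
      Computable.id (Computable.const _)
      (hg.comp (Computable.succ.comp (Computable.snd.comp Computable.snd)))
  refine hrec.of_eq ?_
  intro n
  rw [spEE_ofNat]
  induction n with
  | zero =>
    change g 0 = ((⊥ : Set.range spEE) : ℕ)
    apply le_antisymm
    · exact hg4 _ _ (Nat.zero_le _) ((SP_iff _).1 (⊥ : Set.range spEE).2)
    · have : (⊥ : Set.range spEE) ≤ ⟨g 0, (SP_iff _).2 (hg3 0).2⟩ := bot_le
      exact this
  | succ n ih =>
    change g (_ + 1) = ((Nat.Subtype.succ (Nat.Subtype.ofNat (Set.range spEE) n) : Set.range spEE) : ℕ)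
    rw [ih]
    set y := Nat.Subtype.ofNat (Set.range spEE) n
    apply le_antisymm
    · apply hg4
      · exact Nat.Subtype.lt_succ_self y
      · exact (SP_iff _).1 (Nat.Subtype.succ y).2
    · have : Nat.Subtype.succ y ≤ ⟨g (y+1), (SP_iff _).2 (hg3 _).2⟩ := by
        apply Nat.Subtype.succ_le_of_lt
        change (y:ℕ) < g (y+1)
        have := (hg3 (y+1)).1
        omega
      exact this

theorem comp_numden (a : ℕ → ℚ) (ha : Computable a) (h0 : ∀ s, 0 ≤ a s) :
    ∃ p q : ℕ → ℕ, Computable p ∧ Computable q ∧ ∀ s, 0 < q s ∧ a s = (p s : ℚ) / (q s : ℚ) := by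
  have h1 : Computable (fun s => spEE (a s)) :=
    (comp_EE.comp (Computable.encode.comp ha)).of_eq fun s => by
      rw [Denumerable.ofNat_encode]
  refine ⟨fun s => (spEE (a s)).unpair.1 / 2, fun s => (spEE (a s)).unpair.2, ?_, ?_, ?_⟩
  · exact (Primrec.nat_div.comp (Primrec.fst.comp Primrec.unpair)
      (Primrec.const 2)).to_comp.comp h1
  · exact (Primrec.snd.comp Primrec.unpair).to_comp.comp h1
  · intro s
    simp only [spEE_eq, Nat.unpair_pair]
    refine ⟨(a s).den_pos, ?_⟩
    obtain ⟨n, hn⟩ := Int.eq_ofNat_of_zero_le (Rat.num_nonneg.2 (h0 s))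
    rw [hn, sp_enc_nn]
    have : 2 * n / 2 = n := by omega
    rw [this]
    have h2 := Rat.num_div_den (a s)
    rw [hn, Int.cast_natCast] at h2
    exact h2.symm

section spcomp
variable {α : Type*} [Primcodable α]

theorem sp_mul {f g : α → ℕ} (hf : Computable f) (hg : Computable g) :
    Computable (fun v => f v * g v) := (Primrec.nat_mul.to_comp).comp hf hg
theorem sp_add {f g : α → ℕ} (hf : Computable f) (hg : Computable g) :
    Computable (fun v => f v + g v) := (Primrec.nat_add.to_comp).comp hf hg
theorem sp_le {f g : α → ℕ} (hf : Computable f) (hg : Computable g) :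
    Computable (fun v => decide (f v ≤ g v)) := (Primrec.nat_le.decide.to_comp).comp hf hg
theorem sp_lt {f g : α → ℕ} (hf : Computable f) (hg : Computable g) :
    Computable (fun v => decide (f v < g v)) := (Primrec.nat_lt.decide.to_comp).comp hf hg
theorem sp_and {f g : α → Bool} (hf : Computable f) (hg : Computable g) :
    Computable (fun v => f v && g v) := (Primrec.and.to_comp).comp hf hg
theorem sp_or {f g : α → Bool} (hf : Computable f) (hg : Computable g) :
    Computable (fun v => f v || g v) := (Primrec.or.to_comp).comp hf hg

theorem sp_ale {a : ℕ → ℚ} (ha : Computable a) (h0 : ∀ s, 0 ≤ a s)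
    {f g : α → ℕ} (hf : Computable f) (hg : Computable g) :
    Computable (fun v => decide (a (f v) ≤ a (g v))) := by
  obtain ⟨p, q, hp, hq, h⟩ := comp_numden a ha h0
  refine (sp_le (sp_mul (hp.comp hf) (hq.comp hg)) (sp_mul (hp.comp hg) (hq.comp hf))).of_eq ?_
  intro v
  rw [decide_eq_decide, (h (f v)).2, (h (g v)).2, div_le_div_iff₀ (by exact_mod_cast (h _).1)
    (by exact_mod_cast (h _).1)]
  norm_cast

theorem sp_gap1 {a : ℕ → ℚ} (ha : Computable a) (h0 : ∀ s, 0 ≤ a s) (A B C : ℕ)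
    {x y z : α → ℕ} (hx : Computable x) (hy : Computable y) (hz : Computable z) :
    Computable (fun v => decide (A * a (z v) + B * a (x v) ≤ C * a (y v))) := by
  obtain ⟨p, q, hp, hq, h⟩ := comp_numden a ha h0
  have px := hp.comp hx
  have py := hp.comp hy
  have pz := hp.comp hz
  have qx := hq.comp hx
  have qy := hq.comp hy
  have qz := hq.comp hz
  refine (sp_le (sp_add (sp_mul (sp_mul (Computable.const A) pz) (sp_mul qx qy))
    (sp_mul (sp_mul (Computable.const B) px) (sp_mul qz qy)))
    (sp_mul (sp_mul (Computable.const C) py) (sp_mul qx qz))).of_eq ?_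
  intro v
  rw [decide_eq_decide, (h (x v)).2, (h (y v)).2, (h (z v)).2]
  have h1 : (0:ℚ) < q (x v) := by exact_mod_cast (h _).1
  have h2 : (0:ℚ) < q (y v) := by exact_mod_cast (h _).1
  have h3 : (0:ℚ) < q (z v) := by exact_mod_cast (h _).1
  have e1 : (A : ℚ) * (p (z v) / q (z v)) + B * (p (x v) / q (x v)) =
    ((A * p (z v)) * (q (x v) * q (y v)) + (B * p (x v)) * (q (z v) * q (y v))) /
      (q (x v) * q (y v) * q (z v)) := by field_simp
  have e2 : (C : ℚ) * (p (y v) / q (y v)) =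
    ((C * p (y v)) * (q (x v) * q (z v))) / (q (x v) * q (y v) * q (z v)) := by field_simp
  rw [e1, e2, div_le_div_iff_of_pos_right (by positivity)]
  norm_cast

theorem sp_gap2 {a : ℕ → ℚ} (ha : Computable a) (h0 : ∀ s, 0 ≤ a s) (A B C : ℕ)
    {x y z : α → ℕ} (hx : Computable x) (hy : Computable y) (hz : Computable z) :
    Computable (fun v => decide (C * a (y v) ≤ A * a (z v) + B * a (x v))) := by
  obtain ⟨p, q, hp, hq, h⟩ := comp_numden a ha h0
  have px := hp.comp hx
  have py := hp.comp hy
  have pz := hp.comp hz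
  have qx := hq.comp hx
  have qy := hq.comp hy
  have qz := hq.comp hz
  refine (sp_le (sp_mul (sp_mul (Computable.const C) py) (sp_mul qx qz))
    (sp_add (sp_mul (sp_mul (Computable.const A) pz) (sp_mul qx qy))
    (sp_mul (sp_mul (Computable.const B) px) (sp_mul qz qy)))
    ).of_eq ?_
  intro v
  rw [decide_eq_decide, (h (x v)).2, (h (y v)).2, (h (z v)).2]
  have h1 : (0:ℚ) < q (x v) := by exact_mod_cast (h _).1
  have h2 : (0:ℚ) < q (y v) := by exact_mod_cast (h _).1
  have h3 : (0:ℚ) < q (z v) := by exact_mod_cast (h _).1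
  have e1 : (A : ℚ) * (p (z v) / q (z v)) + B * (p (x v) / q (x v)) =
    ((A * p (z v)) * (q (x v) * q (y v)) + (B * p (x v)) * (q (z v) * q (y v))) /
      (q (x v) * q (y v) * q (z v)) := by field_simp
  have e2 : (C : ℚ) * (p (y v) / q (y v)) =
    ((C * p (y v)) * (q (x v) * q (z v))) / (q (x v) * q (y v) * q (z v)) := by field_simp
  rw [e1, e2, div_le_div_iff_of_pos_right (by positivity)]
  norm_cast

theorem sp_ball {t : α → ℕ} {P : α → ℕ → Bool} (ht : Computable t)
    (hP : Computable (fun w : α × ℕ => P w.1 w.2)) :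
    Computable (fun v => decide (∀ j < t v, P v j = true)) := by
  have h := Computable.nat_rec (f := t) (g := fun _ : α => true)
    (h := fun v w => w.2 && P v w.1) ht (Computable.const _)
    (sp_and (Computable.snd.comp Computable.snd)
      (hP.comp (Computable.pair Computable.fst (Computable.fst.comp Computable.snd))))
  refine h.of_eq fun v => ?_
  induction t v with
  | zero => simp
  | succ n ih =>
    simp only [ih]
    rw [Bool.eq_iff_iff]
    simp only [Bool.and_eq_true, decide_eq_true_eq]
    constructor
    · rintro ⟨h1, h2⟩ j hj
      rcases Nat.lt_succ_iff_lt_or_eq.1 hj with h | rfl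
      · exact h1 j h
      · exact h2
    · intro h1
      exact ⟨fun j hj => h1 j (by omega), h1 n (by omega)⟩

end spcomp

def SGood (a : ℕ → ℚ) (s t x y z : ℕ) : Prop :=
  (s ≤ x ∧ x < t) ∧ (s ≤ y ∧ y < t) ∧ (s ≤ z ∧ z < t) ∧
  (∀ j < t, s ≤ j → a x ≤ a j ∧ a j ≤ a z) ∧
  a z + 9 * a x ≤ 10 * a y ∧ 10 * a y ≤ 9 * a z + a x

open Classical in
theorem sp_good {α : Type*} [Primcodable α] {a : ℕ → ℚ} (ha : Computable a) (h0 : ∀ s, 0 ≤ a s)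
    {s t x y z : α → ℕ} (hs : Computable s) (ht : Computable t)
    (hx : Computable x) (hy : Computable y) (hz : Computable z) :
    Computable (fun v => decide (SGood a (s v) (t v) (x v) (y v) (z v))) := by
  have hb : Computable (fun v => decide (∀ j < t v,
      (decide (j < s v) || (decide (a (x v) ≤ a j) && decide (a j ≤ a (z v)))) = true)) := by
    apply sp_ball (P := fun v j =>
      (decide (j < s v) || (decide (a (x v) ≤ a j) && decide (a j ≤ a (z v))))) ht
    exact sp_or (sp_lt Computable.snd (hs.comp Computable.fst))
      (sp_and (sp_ale ha h0 (hx.comp Computable.fst) Computable.snd)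
        (sp_ale ha h0 Computable.snd (hz.comp Computable.fst)))
  refine (sp_and (sp_and (sp_le hs hx) (sp_lt hx ht)) (sp_and (sp_and (sp_le hs hy) (sp_lt hy ht))
    (sp_and (sp_and (sp_le hs hz) (sp_lt hz ht)) (sp_and hb (sp_and
      (sp_gap1 ha h0 1 9 10 hx hy hz) (sp_gap2 ha h0 9 1 10 hx hy hz)))))).of_eq ?_
  intro v
  rw [Bool.eq_iff_iff]
  refine Iff.trans ?_ (decide_eq_true_iff (p := SGood a (s v) (t v) (x v) (y v) (z v))).symm
  have e : ∀ j, (j < s v ∨ a (x v) ≤ a j ∧ a j ≤ a (z v)) ↔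
      (s v ≤ j → a (x v) ≤ a j ∧ a j ≤ a (z v)) := by
    intro j
    rw [← not_lt (a := j) (b := s v), or_iff_not_imp_left]
  simp only [Bool.and_eq_true, Bool.or_eq_true, decide_eq_true_eq, SGood, e]
  push_cast
  simp only [one_mul]

theorem sp_blocks {a : ℕ → ℚ} (ha : Computable a) (h0 : ∀ s, 0 ≤ a s) (s0 : ℕ)
    (H : ∀ s ≥ s0, ∀ N, ∃ t x y z, N < t ∧ SGood a s t x y z) :
    ∃ r x y z : ℕ → ℕ, Computable r ∧ Computable x ∧ Computable y ∧ Computable z ∧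
      StrictMono r ∧ ∀ i, SGood a (r i) (r (i+2)) (x i) (y i) (z i) := by
  classical
  let T : ℕ → ℕ × ℕ × ℕ × ℕ := Denumerable.ofNat (ℕ × ℕ × ℕ × ℕ)
  have hT : Computable T := Computable.ofNat _
  have hT1 : Computable (fun n => (T n).1) := Computable.fst.comp hT
  have hT2 : Computable (fun n => (T n).2.1) := Computable.fst.comp (Computable.snd.comp hT)
  have hT3 : Computable (fun n => (T n).2.2.1) :=
    Computable.fst.comp (Computable.snd.comp (Computable.snd.comp hT))
  have hT4 : Computable (fun n => (T n).2.2.2) :=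
    Computable.snd.comp (Computable.snd.comp (Computable.snd.comp hT))
  obtain ⟨g, hg, hg2⟩ := comp_find (α := ℕ × ℕ)
    (fun v n => decide (v.1 < s0) || (decide (v.2 < (T n).1) &&
      decide (SGood a v.1 (T n).1 (T n).2.1 (T n).2.2.1 (T n).2.2.2))) (by
      have hv1 : Computable (fun w : (ℕ × ℕ) × ℕ => w.1.1) := Computable.fst.comp Computable.fst
      have hv2 : Computable (fun w : (ℕ × ℕ) × ℕ => w.1.2) := Computable.snd.comp Computable.fst
      exact sp_or (sp_lt hv1 (Computable.const s0)) (sp_and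
        (sp_lt hv2 (hT1.comp Computable.snd)) (sp_good ha h0 hv1 (hT1.comp Computable.snd)
          (hT2.comp Computable.snd) (hT3.comp Computable.snd) (hT4.comp Computable.snd)))) (by
      rintro ⟨s, N⟩
      by_cases hs : s < s0
      · exact ⟨0, by simp [hs]⟩
      · obtain ⟨t, x, y, z, h1, h2⟩ := H s (by omega) N
        refine ⟨encode (t, x, y, z), ?_⟩
        have : T (encode (t, x, y, z)) = (t, x, y, z) := Denumerable.ofNat_encode _
        simp only [this]
        simp [h1, h2])
  have hg3 : ∀ s N, s0 ≤ s → N < (T (g (s, N))).1 ∧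
      SGood a s (T (g (s, N))).1 (T (g (s, N))).2.1 (T (g (s, N))).2.2.1 (T (g (s, N))).2.2.2 := by
    intro s N hs
    have h1 := (hg2 (s, N)).1
    have hs' : ¬ s < s0 := by omega
    simpa [hs'] using h1
  let st : ℕ → ℕ × ℕ := fun n => Nat.rec (motive := fun _ => ℕ × ℕ) (s0, s0 + 1)
      (fun _ ih => (ih.2, (T (g ih)).1)) n
  have hst : Computable st :=
    Computable.nat_rec (f := fun n : ℕ => n) (g := fun _ => (s0, s0 + 1))
      (h := fun _ p => (p.2.2, (T (g p.2)).1))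
      Computable.id (Computable.const _)
      (Computable.pair (Computable.snd.comp (Computable.snd.comp Computable.snd))
        (hT1.comp (hg.comp (Computable.snd.comp Computable.snd))))
  have hs1 : ∀ n, (st (n+1)).1 = (st n).2 := fun n => rfl
  have hs2 : ∀ n, (st (n+1)).2 = (T (g (st n))).1 := fun n => rfl
  have hinv : ∀ n, s0 ≤ (st n).1 ∧ (st n).1 < (st n).2 := by
    intro n
    induction n with
    | zero => exact ⟨le_refl s0, Nat.lt_succ_self s0⟩
    | succ n ih =>
      rw [hs1, hs2]
      exact ⟨by omega, (hg3 (st n).1 (st n).2 ih.1).1⟩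
  refine ⟨fun n => (st n).1, fun n => (T (g (st n))).2.1, fun n => (T (g (st n))).2.2.1,
    fun n => (T (g (st n))).2.2.2, Computable.fst.comp hst, hT2.comp (hg.comp hst),
    hT3.comp (hg.comp hst), hT4.comp (hg.comp hst), ?_, ?_⟩
  · apply strictMono_nat_of_lt_succ
    intro n
    rw [hs1]
    exact (hinv n).2
  · intro i
    have : (st (i+2)).1 = (T (g (st i))).1 := rfl
    simp only [this]
    exact (hg3 (st i).1 (st i).2 (hinv i).1).2

/-- running maximum along a computable index selection -/
theorem sp_run (γ : ℝ) {a : ℕ → ℚ} (ha : IsCompApprox a γ) (n0 : ℕ)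
    (h : ∀ n ≥ n0, (a n : ℝ) < γ) : ∃ b : ℕ → ℚ, IsCompApprox b γ ∧ Monotone b := by
  have h0 : ∀ s, 0 ≤ a s := fun s => (ha.2.1 s).1
  let k : ℕ → ℕ := fun n => Nat.rec (motive := fun _ => ℕ) n0
    (fun m ih => bif decide (a ih ≤ a (n0 + m + 1)) then n0 + m + 1 else ih) n
  have hk : Computable k := by
    have h1 : Computable (fun w : ℕ × ℕ × ℕ => n0 + w.2.1 + 1) :=
      Computable.succ.comp (sp_add (Computable.const n0) (Computable.fst.comp Computable.snd))
    have h2 : Computable (fun w : ℕ × ℕ × ℕ => w.2.2) := Computable.snd.comp Computable.snd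
    exact Computable.nat_rec (f := fun n : ℕ => n) (g := fun _ => n0)
      (h := fun _ p => bif decide (a p.2 ≤ a (n0 + p.1 + 1)) then n0 + p.1 + 1 else p.2)
      Computable.id (Computable.const _)
      (Computable.cond (sp_ale ha.1 h0 h2 h1) h1 h2)
  have hks : ∀ n, k (n+1) = bif decide (a (k n) ≤ a (n0 + n + 1)) then n0 + n + 1 else k n :=
    fun n => rfl
  have hk0 : ∀ n, n0 ≤ k n := by
    intro n
    induction n with
    | zero => exact le_refl n0
    | succ n ih =>
      rw [hks]
      by_cases hc : a (k n) ≤ a (n0 + n + 1)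
      · simp [hc]; omega
      · simp [hc, ih]
  have hkm : ∀ n, a (k n) ≤ a (k (n+1)) := by
    intro n
    rw [hks]
    by_cases hc : a (k n) ≤ a (n0 + n + 1)
    · simp [hc]
    · simp [hc]
  have hkl : ∀ n, a (n0 + n) ≤ a (k n) := by
    intro n
    cases n with
    | zero => exact le_refl (a n0)
    | succ n =>
      rw [hks]
      by_cases hc : a (k n) ≤ a (n0 + n + 1)
      · simp only [hc, decide_true, cond_true]
        exact le_of_eq rfl
      · simp only [hc, decide_false, cond_false]
        exact (not_le.1 hc).le
  refine ⟨fun n => a (k n), ⟨ha.1.comp hk, fun s => ha.2.1 _, ?_⟩, monotone_nat_of_le_succ hkm⟩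
  have ht : Tendsto (fun n => (a (n0 + n) : ℝ)) atTop (nhds γ) := by
    have := (tendsto_add_atTop_iff_nat n0).2 ha.2.2
    simpa [add_comm] using this
  refine tendsto_of_tendsto_of_tendsto_of_le_of_le ht tendsto_const_nhds ?_ ?_
  · intro n; exact Rat.cast_le.2 (hkl n)
  · intro n; exact (h _ (hk0 n)).le

theorem sp_run' (γ : ℝ) {a : ℕ → ℚ} (ha : IsCompApprox a γ) (n0 : ℕ)
    (h : ∀ n ≥ n0, γ < (a n : ℝ)) : ∃ b : ℕ → ℚ, IsCompApprox b γ ∧ Antitone b := by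
  have h0 : ∀ s, 0 ≤ a s := fun s => (ha.2.1 s).1
  let k : ℕ → ℕ := fun n => Nat.rec (motive := fun _ => ℕ) n0
    (fun m ih => bif decide (a (n0 + m + 1) ≤ a ih) then n0 + m + 1 else ih) n
  have hk : Computable k := by
    have h1 : Computable (fun w : ℕ × ℕ × ℕ => n0 + w.2.1 + 1) :=
      Computable.succ.comp (sp_add (Computable.const n0) (Computable.fst.comp Computable.snd))
    have h2 : Computable (fun w : ℕ × ℕ × ℕ => w.2.2) := Computable.snd.comp Computable.snd
    exact Computable.nat_rec (f := fun n : ℕ => n) (g := fun _ => n0)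
      (h := fun _ p => bif decide (a (n0 + p.1 + 1) ≤ a p.2) then n0 + p.1 + 1 else p.2)
      Computable.id (Computable.const _)
      (Computable.cond (sp_ale ha.1 h0 h1 h2) h1 h2)
  have hks : ∀ n, k (n+1) = bif decide (a (n0 + n + 1) ≤ a (k n)) then n0 + n + 1 else k n :=
    fun n => rfl
  have hk0 : ∀ n, n0 ≤ k n := by
    intro n
    induction n with
    | zero => exact le_refl n0
    | succ n ih =>
      rw [hks]
      by_cases hc : a (n0 + n + 1) ≤ a (k n)
      · simp [hc]; omega
      · simp [hc, ih]
  have hkm : ∀ n, a (k (n+1)) ≤ a (k n) := by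
    intro n
    rw [hks]
    by_cases hc : a (n0 + n + 1) ≤ a (k n)
    · simp [hc]
    · simp [hc]
  have hkl : ∀ n, a (k n) ≤ a (n0 + n) := by
    intro n
    cases n with
    | zero => exact le_refl (a n0)
    | succ n =>
      rw [hks]
      by_cases hc : a (n0 + n + 1) ≤ a (k n)
      · simp only [hc, decide_true, cond_true]
        exact le_of_eq rfl
      · simp only [hc, decide_false, cond_false]
        exact (not_le.1 hc).le
  refine ⟨fun n => a (k n), ⟨ha.1.comp hk, fun s => ha.2.1 _, ?_⟩, antitone_nat_of_succ_le hkm⟩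
  have ht : Tendsto (fun n => (a (n0 + n) : ℝ)) atTop (nhds γ) := by
    have := (tendsto_add_atTop_iff_nat n0).2 ha.2.2
    simpa [add_comm] using this
  refine tendsto_of_tendsto_of_tendsto_of_le_of_le tendsto_const_nhds ht ?_ ?_
  · intro n; exact (h _ (hk0 n)).le
  · intro n; exact Rat.cast_le.2 (hkl n)

def RGood (a : ℕ → ℝ) (s t x y z : ℕ) : Prop :=
  (s ≤ x ∧ x < t) ∧ (s ≤ y ∧ y < t) ∧ (s ≤ z ∧ z < t) ∧
  (∀ j < t, s ≤ j → a x ≤ a j ∧ a j ≤ a z) ∧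
  a z + 9 * a x ≤ 10 * a y ∧ 10 * a y ≤ 9 * a z + a x

theorem sp_term_low (b : ℕ → ℝ) (hb : Tendsto b atTop (nhds 0)) (s j0 N : ℕ) (hj0 : s ≤ j0)
    (hd : ∀ j ≥ s, 9/10 * |b j| ≤ |b (j+1)|) (D : ℝ) (hD : 0 < D) (hbj : b j0 = -D)
    (hmax : ∀ j ≥ s, |b j| ≤ D) : ∃ t x y z, N < t ∧ RGood b s t x y z := by
  have hsm : ∃ N0, ∀ j ≥ N0, |b j| < D/20 := by
    obtain ⟨N0, h⟩ := Metric.tendsto_atTop.1 hb (D/20) (by positivity)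
    exact ⟨N0, fun j hj => by simpa [Real.dist_eq] using h j hj⟩
  obtain ⟨N0, hN0⟩ := hsm
  -- first index with small distance
  have hex : ∃ m, |b (j0 + m)| ≤ D/2 := ⟨N0, by have := hN0 (j0+N0) (by omega); linarith⟩
  classical
  obtain ⟨k, hk1, hk2, hk3⟩ : ∃ k ≥ j0, |b k| ≤ D/2 ∧ 9/20 * D ≤ |b k| := by
    refine ⟨j0 + Nat.find hex, by omega, Nat.find_spec hex, ?_⟩
    have hpos : Nat.find hex ≠ 0 := by
      intro h
      have := Nat.find_spec hex
      rw [h, add_zero, hbj, abs_neg, abs_of_pos hD] at this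
      linarith
    obtain ⟨m, hm⟩ := Nat.exists_eq_succ_of_ne_zero hpos
    have h1 := Nat.find_min hex (m := m) (by omega)
    have h2 := hd (j0 + m) (by omega)
    rw [hm, Nat.succ_eq_add_one, ← add_assoc]
    push Not at h1
    linarith
  set t := N + N0 + k + j0 + 2 with ht
  obtain ⟨z, hz1, hz2⟩ := Finset.exists_max_image (Finset.Ico s t) b ⟨j0, by
    simp only [Finset.mem_Ico]; omega⟩
  simp only [Finset.mem_Ico] at hz1 hz2
  have hlast := abs_lt.1 (hN0 (t-1) (by omega))
  have hzl := hz2 (t-1) (by omega)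
  have hzD := abs_le.1 (hmax z hz1.1)
  have hmm : ∀ j < t, s ≤ j → b j0 ≤ b j ∧ b j ≤ b z := fun j hj hs =>
    ⟨by rw [hbj]; exact (abs_le.1 (hmax j hs)).1, hz2 j ⟨hs, hj⟩⟩
  by_cases hc : D/4 ≤ b z
  · refine ⟨t, j0, t-1, z, by omega, by omega, by omega, hz1, hmm, ?_, ?_⟩
    · rw [hbj]; linarith
    · rw [hbj]; linarith
  · push Not at hc
    have hkz := hz2 k (by omega)
    have hkn : b k < 0 := by
      by_contra h
      push Not at h
      rw [abs_of_nonneg h] at hk3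
      linarith
    rw [abs_of_neg hkn] at hk2 hk3
    refine ⟨t, j0, k, z, by omega, by omega, by omega, hz1, hmm, ?_, ?_⟩
    · rw [hbj]; linarith
    · rw [hbj]; linarith

theorem sp_term (b : ℕ → ℝ) (hb : Tendsto b atTop (nhds 0)) (h0 : ∀ j, b j ≠ 0) (s N : ℕ)
    (hd : ∀ j ≥ s, 9/10 * |b j| ≤ |b (j+1)|) : ∃ t x y z, N < t ∧ RGood b s t x y z := by
  have hs := abs_pos.2 (h0 s)
  obtain ⟨N0, h⟩ := Metric.tendsto_atTop.1 hb (|b s|) hs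
  obtain ⟨j0, hj1, hj2⟩ := Finset.exists_max_image (Finset.Icc s (s + N0)) (fun j => |b j|) ⟨s, by
    simp⟩
  simp only [Finset.mem_Icc] at hj1 hj2
  have hmax : ∀ j ≥ s, |b j| ≤ |b j0| := by
    intro j hj
    by_cases hjN : j ≤ s + N0
    · exact hj2 j ⟨hj, hjN⟩
    · have h1 := h j (by omega)
      rw [Real.dist_eq, sub_zero] at h1
      exact h1.le.trans (hj2 s (by omega))
  have hD := abs_pos.2 (h0 j0)
  rcases lt_or_gt_of_ne (h0 j0) with hneg | hpos
  · exact sp_term_low b hb s j0 N hj1.1 hd _ hD (by rw [abs_of_neg hneg, neg_neg]) hmax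
  · obtain ⟨t, x, y, z, ht, hx, hy, hz, hm, hg1, hg2⟩ := sp_term_low (fun j => - b j)
      (by simpa using hb.neg) s j0 N hj1.1 (by simpa using hd) (|b j0|) hD
      (by simp only [abs_of_pos hpos]) (by simpa using hmax)
    refine ⟨t, z, y, x, ht, hz, hy, hx, fun j hj hs => ?_, ?_, ?_⟩
    · have := hm j hj hs
      constructor <;> linarith
    · linarith
    · linarith

theorem sp_ev (γ : ℝ) (hirr : ∀ q : ℚ, γ ≠ q) (a : ℕ → ℚ) (hns : ¬ IsSpeedable a γ)
    (f : ℕ → ℕ) (hf : IsComputableOrder f) :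
    ∀ᶠ s in atTop, 9/10 * |γ - a s| < |γ - a (f s)| := by
  have h1 : ¬ speedLiminf a f γ ≤ ((((9/10 : ℚ) : ℝ)) : EReal) := fun h =>
    hns ⟨9/10, by norm_num, by norm_num, Or.inr ⟨f, hf, h⟩⟩
  have h2 := eventually_lt_of_lt_liminf (not_le.1 h1)
  filter_upwards [h2] with s hs
  have hs' := EReal.coe_lt_coe_iff.1 hs
  have hp : 0 < |γ - a s| := abs_pos.2 (sub_ne_zero.2 (hirr _))
  rw [abs_div, lt_div_iff₀ hp] at hs'
  push_cast at hs'
  exact hs'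

theorem sp_step (γ : ℝ) (hirr : ∀ q : ℚ, γ ≠ q) (a : ℕ → ℚ) (hns : ¬ IsSpeedable a γ)
    (R T : ℕ → ℕ) (hR : Computable R) (hT : Computable T) (hRm : StrictMono R)
    (hRT : ∀ i, R i ≤ T i ∧ T i < R (i+1)) :
    ∀ᶠ i in atTop, ∀ s, R i ≤ s → s < R (i+1) → 9/10 * |γ - a s| < |γ - a (T i)| := by
  let k : ℕ → ℕ := fun n => Nat.rec (motive := fun _ => ℕ) 0
    (fun m ih => bif decide (R (ih + 1) ≤ m + 1) then ih + 1 else ih) n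
  have hk : Computable k := by
    have h1 : Computable (fun w : ℕ × ℕ × ℕ => w.2.1 + 1) :=
      Computable.succ.comp (Computable.fst.comp Computable.snd)
    have h2 : Computable (fun w : ℕ × ℕ × ℕ => w.2.2) := Computable.snd.comp Computable.snd
    have h3 : Computable (fun w : ℕ × ℕ × ℕ => w.2.2 + 1) := Computable.succ.comp h2
    exact Computable.nat_rec (f := fun n : ℕ => n) (g := fun _ => 0)
      (h := fun _ p => bif decide (R (p.2 + 1) ≤ p.1 + 1) then p.2 + 1 else p.2)
      Computable.id (Computable.const _)
      (Computable.cond (sp_le (hR.comp h3) h1) h3 h2)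
  have hks : ∀ n, k (n+1) = bif decide (R (k n + 1) ≤ n + 1) then k n + 1 else k n :=
    fun n => rfl
  have hks1 : ∀ n, R (k n + 1) ≤ n + 1 → k (n+1) = k n + 1 := fun n h => by
    rw [hks]; simp [h]
  have hks2 : ∀ n, ¬ R (k n + 1) ≤ n + 1 → k (n+1) = k n := fun n h => by
    rw [hks]; simp only [h, decide_false, cond_false]
  have hkm : Monotone k := monotone_nat_of_le_succ fun n => by
    by_cases h : R (k n + 1) ≤ n + 1
    · rw [hks1 n h]; omega
    · rw [hks2 n h]
  have hkI : ∀ n, n < R (k n + 1) ∧ (k n = 0 ∨ R (k n) ≤ n) := by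
    intro n
    induction n with
    | zero =>
      refine ⟨?_, Or.inl rfl⟩
      have := hRm (Nat.lt_succ_self (k 0))
      exact lt_of_le_of_lt (Nat.zero_le _) this
    | succ n ih =>
      by_cases h : R (k n + 1) ≤ n + 1
      · rw [hks1 n h]
        have := hRm (Nat.lt_succ_self (k n + 1))
        rw [Nat.succ_eq_add_one] at this
        exact ⟨by omega, Or.inr h⟩
      · rw [hks2 n h]
        exact ⟨by omega, ih.2.imp id (fun h => by omega)⟩
  have hkU : ∀ i s, R i ≤ s → s < R (i+1) → k s = i := by
    intro i s h1 h2
    obtain ⟨h3, h4⟩ := hkI s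
    have h5 : i < k s + 1 := hRm.lt_iff_lt.1 (lt_of_le_of_lt h1 h3)
    rcases h4 with h4 | h4
    · omega
    · have h6 : k s < i + 1 := hRm.lt_iff_lt.1 (lt_of_le_of_lt h4 h2)
      omega
  have hTm : Monotone T := monotone_nat_of_le_succ fun n =>
    ((hRT n).2.trans_le (hRT (n+1)).1).le
  have hkt : Tendsto k atTop atTop := by
    refine tendsto_atTop_atTop_of_monotone hkm fun i => ⟨R i, ?_⟩
    rw [hkU i (R i) le_rfl (hRm (Nat.lt_succ_self i))]
  have hTt : Tendsto T atTop atTop :=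
    tendsto_atTop_mono (fun i => (hRm.id_le i).trans (hRT i).1) tendsto_id
  have hev := sp_ev γ hirr a hns (fun s => T (k s)) ⟨hT.comp hk, hTm.comp hkm, hTt.comp hkt⟩
  obtain ⟨n0, hn0⟩ := eventually_atTop.1 hev
  filter_upwards [eventually_ge_atTop n0] with i hi s h1 h2
  have := hn0 s (hi.trans ((hRm.id_le i).trans h1))
  rwa [hkU i s h1 h2] at this

theorem sp_par (γ : ℝ) (hirr : ∀ q : ℚ, γ ≠ q) (a : ℕ → ℚ) (hns : ¬ IsSpeedable a γ)
    (r T : ℕ → ℕ) (hr : Computable r) (hT : Computable T) (hrm : StrictMono r)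
    (hrT : ∀ i, r i ≤ T i ∧ T i < r (i+2)) :
    ∀ᶠ i in atTop, ∀ s, r i ≤ s → s < r (i+2) → 9/10 * |γ - a s| < |γ - a (T i)| := by
  have key : ∀ p : ℕ, ∀ᶠ i in atTop, ∀ s, r (2*i+p) ≤ s → s < r (2*(i+1)+p) →
      9/10 * |γ - a s| < |γ - a (T (2*i+p))| := by
    intro p
    have hc : Computable (fun i : ℕ => 2*i+p) :=
      sp_add (sp_mul (Computable.const 2) Computable.id) (Computable.const p)
    refine sp_step γ hirr a hns (fun i => r (2*i+p)) (fun i => T (2*i+p)) (hr.comp hc) (hT.comp hc)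
      (fun i j h => hrm (by omega)) (fun i => ?_)
    have := hrT (2*i+p)
    have e : 2*(i+1)+p = 2*i+p+2 := by ring
    rw [e]
    exact this
  obtain ⟨n0, h0⟩ := eventually_atTop.1 (key 0)
  obtain ⟨n1, h1⟩ := eventually_atTop.1 (key 1)
  filter_upwards [eventually_ge_atTop (2*n0+2*n1+2)] with i hi s hs1 hs2
  rcases Nat.even_or_odd' i with ⟨m, rfl | rfl⟩
  · exact h0 m (by omega) s hs1 hs2
  · exact h1 m (by omega) s hs1 (by
      have e : 2*(m+1)+1 = 2*m+1+2 := by ring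
      rw [e]; exact hs2)

theorem ca_not_lce_not_rce_fully_speedable (γ : ℝ) (hγ : γ ∈ Set.Ioo (0 : ℝ) 1)
    (hca : ∃ a : ℕ → ℚ, IsCompApprox a γ)
    (hnotlce : ¬ ∃ a : ℕ → ℚ, IsCompApprox a γ ∧ Monotone a)
    (hnotrce : ¬ ∃ a : ℕ → ℚ, IsCompApprox a γ ∧ Antitone a) :
    ∀ a : ℕ → ℚ, IsCompApprox a γ → IsSpeedable a γ := by
  intro a ha
  by_contra hns
  have hirr : ∀ q : ℚ, γ ≠ q := fun q hq =>
    hns ⟨0, le_refl _, by norm_num, Or.inl ⟨q, hq⟩⟩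
  have h0 : ∀ s, 0 ≤ a s := fun s => (ha.2.1 s).1
  have hsucc := sp_ev γ hirr a hns Nat.succ ⟨Computable.succ, fun i j h => Nat.succ_le_succ h,
    tendsto_add_atTop_nat 1⟩
  obtain ⟨s0, hs0⟩ := eventually_atTop.1 hsucc
  have hb : Tendsto (fun s => (a s : ℝ) - γ) atTop (nhds 0) := by
    simpa using ha.2.2.sub_const γ
  obtain ⟨r, x, y, z, hr, hx, hy, hz, hrm, hgood⟩ := sp_blocks ha.1 h0 s0 (by
    intro s hs N
    obtain ⟨t, x, y, z, ht, h1, h2, h3, h4, h5, h6⟩ := sp_term (fun s => (a s : ℝ) - γ) hb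
      (fun j => sub_ne_zero.2 (hirr _).symm) s N (fun j hj => by
        have := hs0 j (hs.trans hj)
        rw [abs_sub_comm, abs_sub_comm _ γ]
        exact this.le)
    refine ⟨t, x, y, z, ht, h1, h2, h3, fun j hj hsj => ?_, ?_, ?_⟩
    · have := h4 j hj hsj
      exact ⟨by exact_mod_cast (sub_le_sub_iff_right γ).1 this.1,
        by exact_mod_cast (sub_le_sub_iff_right γ).1 this.2⟩
    · have : (a z : ℝ) + 9 * a x ≤ 10 * a y := by linarith
      exact_mod_cast this
    · have : 10 * (a y : ℝ) ≤ 9 * a z + a x := by linarith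
      exact_mod_cast this)
  have ex := sp_par γ hirr a hns r x hr hx hrm (fun i => (hgood i).1)
  have ey := sp_par γ hirr a hns r y hr hy hrm (fun i => (hgood i).2.1)
  have ez := sp_par γ hirr a hns r z hr hz hrm (fun i => (hgood i).2.2.1)
  have hone : ∀ᶠ i in atTop, ∀ j k, r i ≤ j → j < r (i+2) → r i ≤ k → k < r (i+2) →
      (a j : ℝ) < γ → γ < a k → False := by
    filter_upwards [ex, ey, ez] with i hx hy hz j k hj1 hj2 hk1 hk2 hj hk
    obtain ⟨gx, gy, gz, gm, g1, g2⟩ := hgood i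
    have m1 : (a (x i) : ℝ) ≤ a j := by exact_mod_cast (gm j hj2 hj1).1
    have m2 : (a k : ℝ) ≤ a (z i) := by exact_mod_cast (gm k hk2 hk1).2
    have g1' : (a (z i) : ℝ) + 9 * a (x i) ≤ 10 * a (y i) := by exact_mod_cast g1
    have g2' : 10 * (a (y i) : ℝ) ≤ 9 * a (z i) + a (x i) := by exact_mod_cast g2
    have dx : |γ - a (x i)| = γ - a (x i) := abs_of_pos (by linarith)
    have dz : |γ - a (z i)| = a (z i) - γ := by
      rw [abs_of_neg (by linarith)]; ring
    have q1 := hx (z i) gz.1 gz.2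
    have q2 := hz (x i) gx.1 gx.2
    have q3 := hy (x i) gx.1 gx.2
    have q4 := hy (z i) gz.1 gz.2
    rw [dx, dz] at q1 q2
    rw [dx] at q3
    rw [dz] at q4
    rcases abs_cases (γ - (a (y i) : ℝ)) with ⟨h, -⟩ | ⟨h, -⟩ <;> rw [h] at q3 q4 <;> linarith
  obtain ⟨i0, hi0⟩ := eventually_atTop.1 hone
  have hcross : ∀ n ≥ r i0, ((a n : ℝ) < γ ↔ (a (n+1) : ℝ) < γ) := by
    intro n hn
    obtain ⟨i, hi, h1, h2⟩ : ∃ i ≥ i0, r i ≤ n ∧ n < r (i+1) := by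
      classical
      have hex : ∃ m, n < r (i0 + m) := ⟨n+1, by
        have := hrm.id_le (i0 + (n+1))
        simp only [id] at this
        omega⟩
      have hp : Nat.find hex ≠ 0 := by
        intro h
        have := Nat.find_spec hex
        rw [h, add_zero] at this
        omega
      obtain ⟨m, hm⟩ := Nat.exists_eq_succ_of_ne_zero hp
      refine ⟨i0 + m, by omega, ?_, ?_⟩
      · exact not_lt.1 (Nat.find_min hex (m := m) (by omega))
      · have := Nat.find_spec hex
        rwa [hm] at this
    have h3 : r (i+1) < r (i+2) := hrm (by omega)
    have := hi0 i hi
    constructor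
    · intro h
      by_contra hc
      exact this n (n+1) h1 (by omega) (by omega) (by omega) h
        (lt_of_le_of_ne (not_lt.1 hc) (hirr _))
    · intro h
      by_contra hc
      exact this (n+1) n (by omega) (by omega) h1 (by omega) h
        (lt_of_le_of_ne (not_lt.1 hc) (hirr _))
  have hall : ∀ n ≥ r i0, ((a n : ℝ) < γ ↔ (a (r i0) : ℝ) < γ) := by
    intro n hn
    induction n, hn using Nat.le_induction with
    | base => exact Iff.rfl
    | succ n hn ih => exact (hcross n hn).symm.trans ih
  by_cases hc : (a (r i0) : ℝ) < γ
  · exact hnotlce (sp_run γ ha (r i0) fun n hn => (hall n hn).2 hc)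
  · exact hnotrce (sp_run' γ ha (r i0) fun n hn =>
      lt_of_le_of_ne (not_lt.1 fun h => hc ((hall n hn).1 h)) (hirr _))
end

section
/- Every computably approximable real is c.a. speedable: if a real α ∈ (0,1) has a computable approximation, then it has a computable approximation that is speedable. -/
open Filter

/-- The raw encoding of the rationals. -/
def e0 (q : ℚ) : ℕ := @Encodable.encode ℚ Rat.instEncodable q

theorem e0_eq (q : ℚ) : e0 q = Nat.pair (Equiv.intEquivNat q.num) q.den := rfl

theorem e0_ofNat : ∃ (_ : Infinite (Set.range e0)) (_ : DecidablePred (· ∈ Set.range e0)),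
    ∀ n, e0 (Denumerable.ofNat ℚ n) = (Nat.Subtype.ofNat (Set.range e0) n : ℕ) := by
  let : DecidablePred (· ∈ Set.range e0) := @Encodable.decidableRangeEncode ℚ Rat.instEncodable
  let : Infinite (Set.range e0) :=
    Infinite.of_injective _
      (Equiv.ofInjective _ (@Encodable.encode_injective ℚ Rat.instEncodable)).injective
  refine ⟨inferInstance, inferInstance, fun n => ?_⟩
  have : Denumerable.ofNat ℚ n = (@Encodable.equivRangeEncode ℚ Rat.instEncodable).symm
      (Nat.Subtype.ofNat (Set.range e0) n) := rfl
  rw [this]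
  have := (@Encodable.equivRangeEncode ℚ Rat.instEncodable).apply_symm_apply
    (Nat.Subtype.ofNat (Set.range e0) n)
  exact congrArg Subtype.val this

theorem natAbs_code (z : ℤ) : (Equiv.intEquivNat z + 1) / 2 = z.natAbs := by
  cases z with
  | ofNat n =>
    have : Equiv.intEquivNat (Int.ofNat n) = 2 * n := rfl
    rw [this]; simp; omega
  | negSucc n =>
    have : Equiv.intEquivNat (Int.negSucc n) = 2 * n + 1 := rfl
    rw [this]; simp; omega

theorem mem_range_e0 (n : ℕ) : n ∈ Set.range e0 ↔
    0 < n.unpair.2 ∧ Nat.Coprime ((n.unpair.1 + 1) / 2) n.unpair.2 := by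
  constructor
  · rintro ⟨q, rfl⟩
    rw [e0_eq, Nat.unpair_pair]
    simp only [natAbs_code]
    exact ⟨q.pos, q.reduced⟩
  · rintro ⟨h1, h2⟩
    obtain ⟨z, hz⟩ := Equiv.intEquivNat.surjective n.unpair.1
    rw [← hz, natAbs_code] at h2
    refine ⟨⟨z, n.unpair.2, h1.ne', h2⟩, ?_⟩
    rw [e0_eq]
    simp only [hz, Nat.pair_unpair]

theorem coprime_iff_bdd (a d : ℕ) (hd : 0 < d) :
    Nat.Coprime a d ↔ ∀ k < d + 1, ¬ (1 < k ∧ a % k = 0 ∧ d % k = 0) := by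
  constructor
  · rintro h k - ⟨h1, h2, h3⟩
    have := Nat.dvd_gcd (Nat.dvd_of_mod_eq_zero h2) (Nat.dvd_of_mod_eq_zero h3)
    rw [h] at this
    have := Nat.le_of_dvd one_pos this
    omega
  · intro h
    by_contra hc
    have hg : Nat.gcd a d ≠ 1 := hc
    have h0 : 0 < Nat.gcd a d := Nat.gcd_pos_of_pos_right _ hd
    have hle : Nat.gcd a d ≤ d := Nat.gcd_le_right _ hd
    exact h (Nat.gcd a d) (by omega) ⟨by omega, Nat.mod_eq_zero_of_dvd (Nat.gcd_dvd_left _ _),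
      Nat.mod_eq_zero_of_dvd (Nat.gcd_dvd_right _ _)⟩

theorem prim_mem : PrimrecPred (· ∈ Set.range e0) := by
  have h1 : PrimrecRel fun (k : ℕ) (p : ℕ × ℕ) => ¬ (1 < k ∧ p.1 % k = 0 ∧ p.2 % k = 0) := by
    apply PrimrecRel.not
    refine PrimrecPred.and (PrimrecRel.comp Primrec.nat_lt (Primrec.const 1) Primrec.fst)
      (PrimrecPred.and ?_ ?_)
    · exact PrimrecRel.comp Primrec.eq
        (Primrec.nat_mod.comp (Primrec.fst.comp Primrec.snd) Primrec.fst) (Primrec.const 0)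
    · exact PrimrecRel.comp Primrec.eq
        (Primrec.nat_mod.comp (Primrec.snd.comp Primrec.snd) Primrec.fst) (Primrec.const 0)
  have hx : Primrec fun n : ℕ => n.unpair.1 := Primrec.fst.comp Primrec.unpair
  have hd : Primrec fun n : ℕ => n.unpair.2 := Primrec.snd.comp Primrec.unpair
  have hA : Primrec fun n : ℕ => (n.unpair.1 + 1) / 2 :=
    Primrec.nat_div.comp (Primrec.succ.comp hx) (Primrec.const 2)
  have h2 := PrimrecRel.comp h1.forall_mem_list (Primrec.list_range.comp (Primrec.succ.comp hd)) (hA.pair hd)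
  refine PrimrecPred.of_eq
    (PrimrecPred.and (PrimrecRel.comp Primrec.nat_lt (Primrec.const 0) hd) h2) ?_
  intro n
  rw [mem_range_e0]
  refine and_congr_right fun h => ?_
  rw [coprime_iff_bdd _ _ h]
  simp only [List.mem_range]

theorem comp_enum : Computable fun n : ℕ => e0 (Denumerable.ofNat ℚ n) := by
  obtain ⟨i1, i2, h⟩ := e0_ofNat
  have hinf : (Set.range e0).Infinite := Set.infinite_coe_iff.mp i1
  have H : ∀ y : ℕ, ∃ m, y + m + 1 ∈ Set.range e0 := by
    intro y
    obtain ⟨b, hb, hlt⟩ := hinf.exists_gt y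
    exact ⟨b - (y + 1), by rwa [show y + (b - (y + 1)) + 1 = b by omega]⟩
  let : DecidableRel fun y m : ℕ => y + m + 1 ∈ Set.range e0 := fun y m => i2 _
  have hc : ComputablePred fun p : ℕ × ℕ => p.1 + p.2 + 1 ∈ Set.range e0 := by
    have := prim_mem.comp (Primrec.succ.comp (Primrec.nat_add.comp Primrec.fst Primrec.snd))
    exact ⟨_, this.decide.to_comp⟩
  have hf := Computable.find hc H
  have hg : Computable fun y => y + Nat.find (H y) + 1 :=
    Computable.succ.comp (Primrec.nat_add.to_comp.comp Computable.id hf)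
  have hrec := Computable.nat_rec (α := ℕ) (f := id) (g := fun _ => e0 (Denumerable.ofNat ℚ 0))
    (h := fun _ p => p.2 + Nat.find (H p.2) + 1) Computable.id (Computable.const _)
    (hg.comp (Computable.snd.comp Computable.snd)).to₂
  refine hrec.of_eq fun n => ?_
  induction n with
  | zero => rfl
  | succ n ih =>
    simp only [id] at ih ⊢
    rw [ih, h, h]
    rfl

theorem comp_e0 : Computable e0 := by
  have := comp_enum.comp (Computable.encode (α := ℚ))
  refine this.of_eq fun q => ?_
  rw [Denumerable.ofNat_encode]

theorem comp_den : Computable fun q : ℚ => q.den := by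
  refine (Computable.snd.comp (Computable.unpair.comp comp_e0)).of_eq fun q => ?_
  rw [e0_eq, Nat.unpair_pair]

theorem comp_natAbs : Computable fun q : ℚ => q.num.natAbs := by
  have h : Primrec fun x : ℕ => (x + 1) / 2 :=
    Primrec.nat_div.comp Primrec.succ (Primrec.const 2)
  refine (h.to_comp.comp (Computable.fst.comp (Computable.unpair.comp comp_e0))).of_eq fun q => ?_
  rw [e0_eq, Nat.unpair_pair]
  exact natAbs_code _

/-- `ofNat ℚ n` equals `p.1 / (p.2 + 1)`, in terms of raw codes. -/
def CodeRel (p : ℕ × ℕ) (n : ℕ) : Prop :=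
  (e0 (Denumerable.ofNat ℚ n)).unpair.1 % 2 = 0 ∧
    (e0 (Denumerable.ofNat ℚ n)).unpair.1 / 2 * (p.2 + 1) =
      p.1 * (e0 (Denumerable.ofNat ℚ n)).unpair.2

theorem CodeRel_iff : ∀ p n, CodeRel p n ↔ Denumerable.ofNat ℚ n = (p.1 : ℚ) / ((p.2 : ℚ) + 1) := by
  intro p n
  simp only [CodeRel]
  generalize Denumerable.ofNat ℚ n = q
  rw [e0_eq, Nat.unpair_pair]
  have hq : (q.den : ℚ) ≠ 0 := by exact_mod_cast q.pos.ne'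
  have hp : (p.2 : ℚ) + 1 ≠ 0 := by positivity
  rw [eq_div_iff hp]
  have hqq : q * ((p.2 : ℚ) + 1) = p.1 ↔ (q.num : ℚ) * ((p.2 : ℚ) + 1) = p.1 * q.den := by
    conv_lhs => rw [← Rat.num_div_den q]
    rw [div_mul_eq_mul_div, div_eq_iff hq]
  rw [hqq]
  cases hz : q.num with
  | ofNat k =>
    have : Equiv.intEquivNat (Int.ofNat k) = 2 * k := rfl
    rw [this]
    simp
    norm_cast
  | negSucc k =>
    have : Equiv.intEquivNat (Int.negSucc k) = 2 * k + 1 := rfl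
    rw [this]
    constructor
    · rintro ⟨h, -⟩
      simp only at h
      omega
    · intro h
      exfalso
      have h1 : ((Int.negSucc k : ℤ) : ℚ) < 0 := by exact_mod_cast Int.negSucc_lt_zero k
      have h2 : (0:ℚ) ≤ (p.1 : ℚ) * q.den := by positivity
      have h3 : (0:ℚ) < (p.2 : ℚ) + 1 := by positivity
      nlinarith

theorem comp_CodeRel : ComputablePred fun p : (ℕ × ℕ) × ℕ => CodeRel p.1 p.2 := by
  have hu : Computable fun p : (ℕ × ℕ) × ℕ => ((e0 (Denumerable.ofNat ℚ p.2)).unpair, p.1) :=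
    (Computable.unpair.comp (comp_enum.comp Computable.snd)).pair Computable.fst
  have hR : PrimrecPred fun r : (ℕ × ℕ) × (ℕ × ℕ) =>
      r.1.1 % 2 = 0 ∧ r.1.1 / 2 * (r.2.2 + 1) = r.2.1 * r.1.2 := by
    have f1 : Primrec fun r : (ℕ × ℕ) × (ℕ × ℕ) => r.1.1 := Primrec.fst.comp Primrec.fst
    have f2 : Primrec fun r : (ℕ × ℕ) × (ℕ × ℕ) => r.1.2 := Primrec.snd.comp Primrec.fst
    have f3 : Primrec fun r : (ℕ × ℕ) × (ℕ × ℕ) => r.2.1 := Primrec.fst.comp Primrec.snd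
    have f4 : Primrec fun r : (ℕ × ℕ) × (ℕ × ℕ) => r.2.2 := Primrec.snd.comp Primrec.snd
    exact PrimrecPred.and
      (PrimrecRel.comp Primrec.eq (Primrec.nat_mod.comp f1 (Primrec.const 2)) (Primrec.const 0))
      (PrimrecRel.comp Primrec.eq
        (Primrec.nat_mul.comp (Primrec.nat_div.comp f1 (Primrec.const 2)) (Primrec.succ.comp f4))
        (Primrec.nat_mul.comp f3 f2))
  revert hu
  have gen : ∀ C : ℕ → ℕ × ℕ, (Computable fun p : (ℕ × ℕ) × ℕ => (C p.2, p.1)) →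
      ComputablePred fun p : (ℕ × ℕ) × ℕ =>
        (C p.2).1 % 2 = 0 ∧ (C p.2).1 / 2 * (p.1.2 + 1) = p.1.1 * (C p.2).2 := by
    intro C hC
    obtain ⟨d, hd⟩ := hR
    exact ⟨fun p => d (C p.2, p.1), hd.to_comp.comp hC⟩
  exact gen fun n => (e0 (Denumerable.ofNat ℚ n)).unpair

open Classical in
theorem comp_natDiv : Computable fun p : ℕ × ℕ => (p.1 : ℚ) / ((p.2 : ℚ) + 1) := by
  have H : ∀ p, ∃ n, CodeRel p n := fun p => by
    obtain ⟨n, hn⟩ := (Denumerable.eqv ℚ).symm.surjective ((p.1 : ℚ) / ((p.2 : ℚ) + 1))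
    exact ⟨n, (CodeRel_iff _ _).2 hn⟩
  have h1 := (Primrec.ofNat ℚ).to_comp.comp (Computable.find comp_CodeRel H)
  exact h1.of_eq fun p => (CodeRel_iff _ _).1 (Nat.find_spec (H p))

open Classical in
/-- How far the approximations given by two fractions agree. -/
noncomputable def agree (r : ℕ × ((ℕ × ℕ) × (ℕ × ℕ))) : ℕ :=
  Nat.findGreatest (fun k => ∀ j ∈ List.range (k + 1),
    j * r.2.1.1 / r.2.1.2 = j * r.2.2.1 / r.2.2.2) r.1

theorem prim_agree : Primrec agree := by
  have h1 : PrimrecRel fun (j : ℕ) (r : (ℕ × ℕ) × (ℕ × ℕ)) =>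
      j * r.1.1 / r.1.2 = j * r.2.1 / r.2.2 := by
    have f0 : Primrec fun p : ℕ × ((ℕ × ℕ) × (ℕ × ℕ)) => p.1 := Primrec.fst
    have f1 : Primrec fun p : ℕ × ((ℕ × ℕ) × (ℕ × ℕ)) => p.2.1.1 :=
      Primrec.fst.comp (Primrec.fst.comp Primrec.snd)
    have f2 : Primrec fun p : ℕ × ((ℕ × ℕ) × (ℕ × ℕ)) => p.2.1.2 :=
      Primrec.snd.comp (Primrec.fst.comp Primrec.snd)
    have f3 : Primrec fun p : ℕ × ((ℕ × ℕ) × (ℕ × ℕ)) => p.2.2.1 :=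
      Primrec.fst.comp (Primrec.snd.comp Primrec.snd)
    have f4 : Primrec fun p : ℕ × ((ℕ × ℕ) × (ℕ × ℕ)) => p.2.2.2 :=
      Primrec.snd.comp (Primrec.snd.comp Primrec.snd)
    exact PrimrecRel.comp Primrec.eq (Primrec.nat_div.comp (Primrec.nat_mul.comp f0 f1) f2)
      (Primrec.nat_div.comp (Primrec.nat_mul.comp f0 f3) f4)
  have h2 : PrimrecRel fun (r : ℕ × ((ℕ × ℕ) × (ℕ × ℕ))) (k : ℕ) =>
      ∀ j ∈ List.range (k + 1), j * r.2.1.1 / r.2.1.2 = j * r.2.2.1 / r.2.2.2 :=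
    PrimrecRel.comp h1.forall_mem_list
      (Primrec.list_range.comp (Primrec.succ.comp Primrec.snd)) (Primrec.snd.comp Primrec.fst)
  classical
  refine (Primrec.nat_findGreatest Primrec.fst h2).of_eq fun r => ?_
  unfold agree
  congr

/-- Agreement of consecutive members of a sequence. -/
noncomputable def agr (a : ℕ → ℚ) (s : ℕ) : ℕ :=
  agree (s, (((a s).num.natAbs, (a s).den), ((a (s + 1)).num.natAbs, (a (s + 1)).den)))

/-- The shifted sequence. -/
noncomputable def shifted (a : ℕ → ℚ) (s : ℕ) : ℚ :=
  ((min ((a s).num.natAbs * (agr a s + 1) + 6 * (a s).den) ((a s).den * (agr a s + 1)) : ℕ) : ℚ) /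
    (((a s).den * (agr a s + 1) - 1 : ℕ) + 1)

theorem comp_agr (a : ℕ → ℚ) (ha : Computable a) : Computable (agr a) := by
  have hN := comp_natAbs.comp ha
  have hD := comp_den.comp ha
  exact prim_agree.to_comp.comp
    (Computable.id.pair ((hN.pair hD).pair ((hN.comp Computable.succ).pair
      (hD.comp Computable.succ))))

theorem comp_shifted (a : ℕ → ℚ) (ha : Computable a) : Computable (shifted a) := by
  have hN := comp_natAbs.comp ha
  have hD := comp_den.comp ha
  have hp1 : Computable fun s => agr a s + 1 := Computable.succ.comp (comp_agr a ha)
  have m : Computable₂ fun x y : ℕ => x * y := Primrec.nat_mul.to_comp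
  have hDp : Computable fun s => (a s).den * (agr a s + 1) := m.comp hD hp1
  have h6 : Computable fun s => 6 * (a s).den := m.comp (Computable.const 6) hD
  have hNp : Computable fun s => (a s).num.natAbs * (agr a s + 1) := m.comp hN hp1
  have hsum : Computable fun s => (a s).num.natAbs * (agr a s + 1) + 6 * (a s).den :=
    Primrec.nat_add.to_comp.comp hNp h6
  have h1 : Computable fun s => min ((a s).num.natAbs * (agr a s + 1) + 6 * (a s).den)
      ((a s).den * (agr a s + 1)) := Primrec.nat_min.to_comp.comp hsum hDp
  have h2 : Computable fun s => (a s).den * (agr a s + 1) - 1 :=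
    Primrec.nat_sub.to_comp.comp hDp (Computable.const 1)
  have h3 := comp_natDiv.comp (h1.pair h2)
  refine h3.of_eq fun s => ?_
  simp only [shifted]

theorem shifted_eq (a : ℕ → ℚ) (s : ℕ) (h : 0 ≤ a s) :
    shifted a s = min (a s + 6 / ((agr a s : ℚ) + 1)) 1 := by
  unfold shifted
  generalize agr a s = p
  have hd : 0 < (a s).den := (a s).pos
  have hd' : (0 : ℚ) < (a s).den := by exact_mod_cast hd
  have hpos : 0 < (a s).den * (p + 1) := by positivity
  have hnum : (((a s).num.natAbs : ℕ) : ℚ) = a s * (a s).den := by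
    rw [Rat.mul_den_eq_num]
    have : 0 ≤ (a s).num := Rat.num_nonneg.2 h
    exact congrArg (Int.cast (R := ℚ)) (Int.natAbs_of_nonneg this)
  have e : (((a s).den * (p + 1) - 1 : ℕ) : ℚ) + 1 = (a s).den * ((p : ℚ) + 1) := by
    rw [Nat.cast_sub hpos]; push_cast; ring
  rw [e]
  have hP : (0 : ℚ) < (a s).den * ((p : ℚ) + 1) := by positivity
  push_cast
  rw [← min_div_div_right hP.le, div_self hP.ne', hnum]
  congr 1
  field_simp

/-- The floors used by `agree`. -/
def fl (a : ℕ → ℚ) (j s : ℕ) : ℕ := j * (a s).num.natAbs / (a s).den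

theorem fl_spec (a : ℕ → ℚ) (j s : ℕ) (h : 0 ≤ a s) : fl a j s = ⌊(j : ℝ) * (a s : ℝ)⌋₊ := by
  have hnum : (((a s).num.natAbs : ℕ) : ℚ) = (a s).num := by
    exact congrArg (Int.cast (R := ℚ)) (Int.natAbs_of_nonneg (Rat.num_nonneg.2 h))
  have hq : (a s : ℝ) = (((a s).num.natAbs : ℕ) : ℝ) / (((a s).den : ℕ) : ℝ) := by
    have : a s = (((a s).num.natAbs : ℕ) : ℚ) / (((a s).den : ℕ) : ℚ) := by
      rw [hnum, Rat.num_div_den]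
    have h2 := congrArg (Rat.cast (K := ℝ)) this
    rw [Rat.cast_div, Rat.cast_natCast, Rat.cast_natCast] at h2
    exact h2
  unfold fl
  rw [hq, ← mul_div_assoc, ← Nat.cast_mul, Nat.floor_div_eq_div]

theorem agr_spec (a : ℕ → ℚ) (s j : ℕ) (hj : j ≤ agr a s) : fl a j s = fl a j (s + 1) := by
  classical
  have h := Nat.findGreatest_spec (P := fun k => ∀ j ∈ List.range (k + 1),
    fl a j s = fl a j (s + 1)) (n := s) (m := 0) (Nat.zero_le _) (by simp [fl])
  exact h j (List.mem_range.2 (Nat.lt_succ_of_le hj))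

theorem le_agr (a : ℕ → ℚ) (s k : ℕ) (hk : k ≤ s) (h : ∀ j ≤ k, fl a j s = fl a j (s + 1)) :
    k ≤ agr a s := by
  classical
  exact Nat.le_findGreatest (P := fun k => ∀ j ∈ List.range (k + 1),
    fl a j s = fl a j (s + 1)) hk fun j hj => h j (Nat.le_of_lt_succ (List.mem_range.1 hj))

theorem fl_eventually (a : ℕ → ℚ) (α : ℝ) (ha : IsCompApprox a α) (hα : 0 < α)
    (hirr : ¬ ∃ q : ℚ, α = q) (j : ℕ) : ∀ᶠ s in atTop, fl a j s = ⌊(j : ℝ) * α⌋₊ := by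
  obtain ⟨-, hI, ht⟩ := ha
  rcases Nat.eq_zero_or_pos j with rfl | hj
  · simp [fl]
  have hj' : (0 : ℝ) < j := by exact_mod_cast hj
  have h1 : ((⌊(j : ℝ) * α⌋₊ : ℕ) : ℝ) < j * α := by
    refine lt_of_le_of_ne (Nat.floor_le (by positivity)) fun h => hirr ?_
    refine ⟨(⌊(j : ℝ) * α⌋₊ : ℚ) / j, ?_⟩
    push_cast
    rw [eq_div_iff hj'.ne', h]; ring
  have h2 := Nat.lt_floor_add_one ((j : ℝ) * α)
  have ht' := ht.const_mul (j : ℝ)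
  filter_upwards [Tendsto.eventually_const_lt h1 ht', Tendsto.eventually_lt_const h2 ht'] with s hs1 hs2
  rw [fl_spec a j s (hI s).1]
  have hn : (0 : ℝ) ≤ j * (a s : ℝ) := le_trans (Nat.cast_nonneg _) hs1.le
  exact (Nat.floor_eq_iff hn).2 ⟨hs1.le, hs2⟩

theorem agr_tendsto (a : ℕ → ℚ) (α : ℝ) (ha : IsCompApprox a α) (hα : 0 < α)
    (hirr : ¬ ∃ q : ℚ, α = q) : Tendsto (agr a) atTop atTop := by
  rw [tendsto_atTop]
  intro k
  have h : ∀ᶠ s in atTop, ∀ j ∈ Finset.range (k + 1), fl a j s = ⌊(j : ℝ) * α⌋₊ :=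
    (Filter.eventually_all_finset _).2 fun j _ => fl_eventually a α ha hα hirr j
  filter_upwards [h, (tendsto_add_atTop_nat 1).eventually h, eventually_ge_atTop k] with s h1 h2 h3
  refine le_agr a s k h3 fun j hj => ?_
  have hj' := Finset.mem_range.2 (Nat.lt_succ_of_le hj)
  rw [h1 j hj', h2 j hj']

theorem true_stage (a : ℕ → ℚ) (n : ℕ) : ∃ s ≥ n, ∀ t ≥ s, agr a s ≤ agr a t := by
  obtain ⟨s, hs⟩ := exists_minimalFor_of_wellFoundedLT (fun t => n ≤ t) (agr a) ⟨n, le_refl n⟩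
  refine ⟨s, hs.1, fun t ht => ?_⟩
  rcases le_total (agr a s) (agr a t) with h | h
  · exact h
  · exact hs.2 (le_trans hs.1 ht) h

theorem true_stage_bound (a : ℕ → ℚ) (α : ℝ) (ha : IsCompApprox a α) (s : ℕ)
    (h : ∀ t ≥ s, agr a s ≤ agr a t) : (agr a s : ℝ) * |α - a s| ≤ 1 := by
  obtain ⟨-, hI, ht⟩ := ha
  set p := agr a s with hp
  have hfl : ∀ t ≥ s, fl a p t = fl a p s := by
    intro t hts
    induction t, hts using Nat.le_induction with
    | base => rfl
    | succ t hts ih => rw [← ih, agr_spec a t p (h t hts)]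
  have hb : ∀ t, ((fl a p t : ℕ) : ℝ) ≤ p * (a t : ℝ) ∧ p * (a t : ℝ) < (fl a p t : ℕ) + 1 := by
    intro t
    rw [fl_spec a p t (hI t).1]
    have : (0 : ℝ) ≤ a t := by exact_mod_cast (hI t).1
    exact ⟨Nat.floor_le (by positivity), Nat.lt_floor_add_one _⟩
  have ht' : Tendsto (fun t => (p : ℝ) * |(a t : ℝ) - a s|) atTop
      (nhds ((p : ℝ) * |α - a s|)) := ((ht.sub_const _).abs).const_mul _
  refine le_of_tendsto ht' ?_
  filter_upwards [eventually_ge_atTop s] with t hts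
  have h1 := hb t
  have h2 := hb s
  rw [hfl t hts] at h1
  have hp0 : (0 : ℝ) ≤ p := Nat.cast_nonneg _
  rw [← abs_of_nonneg hp0, ← abs_mul, abs_le]
  constructor <;> nlinarith [h1.1, h1.2, h2.1, h2.2]

/-- The interleaved sequence. -/
noncomputable def mix (a : ℕ → ℚ) (s : ℕ) : ℚ := bif s % 2 == 0 then shifted a (s / 2) else a (s / 2)

theorem comp_mix (a : ℕ → ℚ) (ha : Computable a) : Computable (mix a) := by
  have hdiv : Computable fun s : ℕ => s / 2 :=
    (Primrec.nat_div.comp Primrec.id (Primrec.const 2)).to_comp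
  have hmod : Computable fun s : ℕ => s % 2 == 0 :=
    (Primrec.beq.comp (Primrec.nat_mod.comp Primrec.id (Primrec.const 2))
      (Primrec.const 0)).to_comp
  exact Computable.cond hmod ((comp_shifted a ha).comp hdiv) (ha.comp hdiv)

theorem mix_even (a : ℕ → ℚ) (n : ℕ) : mix a (2 * n) = shifted a n := by
  simp [mix]

theorem mix_odd (a : ℕ → ℚ) (n : ℕ) : mix a (2 * n + 1) = a n := by
  have h1 : (2 * n + 1) % 2 = 1 := by omega
  have h2 : (2 * n + 1) / 2 = n := by omega
  simp [mix, h1, h2]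

theorem shifted_mem (a : ℕ → ℚ) (s : ℕ) (h : a s ∈ Set.Icc (0 : ℚ) 1) :
    shifted a s ∈ Set.Icc (0 : ℚ) 1 := by
  rw [shifted_eq a s h.1]
  have := h.1
  exact ⟨le_min (by positivity) zero_le_one, min_le_right _ _⟩

theorem mix_isCompApprox (a : ℕ → ℚ) (α : ℝ) (ha : IsCompApprox a α) (hα : α ∈ Set.Ioo (0 : ℝ) 1)
    (hirr : ¬ ∃ q : ℚ, α = q) : IsCompApprox (mix a) α := by
  obtain ⟨hc, hI, ht⟩ := id ha
  refine ⟨comp_mix a hc, fun s => ?_, ?_⟩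
  · unfold mix
    cases s % 2 == 0
    · exact hI _
    · exact shifted_mem a _ (hI _)
  · have hA := agr_tendsto a α ha hα.1 hirr
    have hS : Tendsto (fun s => (shifted a s : ℝ)) atTop (nhds α) := by
      have e : (fun s => (shifted a s : ℝ)) =
          fun s => min ((a s : ℝ) + 6 / ((agr a s : ℝ) + 1)) 1 := by
        funext s
        rw [shifted_eq a s (hI s).1]
        push_cast
        rfl
      rw [e]
      have h6 : Tendsto (fun s => 6 / ((agr a s : ℝ) + 1)) atTop (nhds 0) :=
        Tendsto.div_atTop tendsto_const_nhds
          (tendsto_atTop_add_const_right _ _ (tendsto_natCast_atTop_atTop.comp hA))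
      have := (ht.add h6).min (tendsto_const_nhds (x := (1 : ℝ)))
      rwa [add_zero, min_eq_left hα.2.le] at this
    have hdiv : Tendsto (fun s : ℕ => s / 2) atTop atTop :=
      Nat.tendsto_div_const_atTop (by norm_num)
    rw [Metric.tendsto_atTop] at *
    intro ε hε
    obtain ⟨N1, h1⟩ := hS ε hε
    obtain ⟨N2, h2⟩ := ht ε hε
    refine ⟨2 * (N1 + N2), fun n hn => ?_⟩
    unfold mix
    cases n % 2 == 0
    · exact h2 _ (by omega)
    · exact h1 _ (by omega)

theorem mix_speed (a : ℕ → ℚ) (α : ℝ) (ha : IsCompApprox a α) (hα : α ∈ Set.Ioo (0 : ℝ) 1)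
    (hirr : ¬ ∃ q : ℚ, α = q) : IsSpeedable (mix a) α := by
  obtain ⟨hc, hI, ht⟩ := id ha
  refine ⟨1 / 2, by norm_num, by norm_num, Or.inr ⟨Nat.succ, ⟨Computable.succ,
    fun x y h => Nat.succ_le_succ h, tendsto_add_atTop_nat 1⟩, ?_⟩⟩
  unfold speedLiminf
  apply Filter.liminf_le_of_frequently_le'
  rw [Filter.frequently_atTop]
  intro n
  have hA := agr_tendsto a α ha hα.1 hirr
  have h6 : Tendsto (fun s => 6 / ((agr a s : ℝ) + 1)) atTop (nhds 0) :=
    Tendsto.div_atTop tendsto_const_nhds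
      (tendsto_atTop_add_const_right _ _ (tendsto_natCast_atTop_atTop.comp hA))
  have hsum := ht.add h6
  rw [add_zero] at hsum
  obtain ⟨N, hN⟩ := eventually_atTop.1
    ((hsum.eventually_lt_const hα.2).and (hA.eventually_ge_atTop 1))
  obtain ⟨s, hs, htrue⟩ := true_stage a (n + N)
  refine ⟨2 * s, by omega, ?_⟩
  obtain ⟨hlt, hp⟩ := hN s (by omega)
  have hbd := true_stage_bound a α ha s htrue
  rw [Nat.succ_eq_add_one, mix_odd, mix_even, shifted_eq a s (hI s).1]
  rw [EReal.coe_le_coe_iff]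
  push_cast
  rw [min_eq_left hlt.le]
  have hp' : (1 : ℝ) ≤ agr a s := by exact_mod_cast hp
  generalize (agr a s : ℝ) = p at *
  have hpp : (0 : ℝ) < p + 1 := by linarith
  have hd : |α - a s| ≤ 2 / (p + 1) := by
    rw [le_div_iff₀ hpp]
    nlinarith [abs_nonneg (α - (a s : ℝ))]
  set ε := 2 / (p + 1) with hε
  have he : 6 / (p + 1) = 3 * ε := by rw [hε]; ring
  have hεpos : 0 < ε := by positivity
  rw [he, abs_div]
  have h2 := abs_le.1 hd
  have hden : 2 * ε ≤ |α - (a s + 3 * ε)| := by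
    rw [abs_sub_comm]
    exact le_trans (by linarith [h2.2]) (le_abs_self _)
  rw [div_le_iff₀ (by linarith)]
  linarith

theorem ca_is_ca_speedable (α : ℝ) (hα : α ∈ Set.Ioo (0 : ℝ) 1)
    (hca : ∃ a : ℕ → ℚ, IsCompApprox a α) :
    ∃ a : ℕ → ℚ, IsCompApprox a α ∧ IsSpeedable a α := by
  obtain ⟨a, ha⟩ := hca
  by_cases hirr : ∃ q : ℚ, α = q
  · exact ⟨a, ha, 0, le_refl _, zero_lt_one, Or.inl hirr⟩
  · exact ⟨mix a, mix_isCompApprox a α ha hα hirr, mix_speed a α ha hα hirr⟩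
end

section
/- If a left-c.e. real α is weakly left-c.e. speedable, then α is left-c.e. speedable; more precisely, if there are a rational ρ ∈ (0,1) and two left-c.e. approximations {a_s} and {b_s} of α with liminf_{s→∞} |(α − b_s)/(α − a_s)| ≤ ρ, then α has a left-c.e. approximation that is ρ-speedable. -/
open Filter

/-- The plain (non-surjective) encoding of rationals. -/
def ratE (q : ℚ) : ℕ := @Encodable.encode ℚ Rat.instEncodable q

theorem ratE_eq (q : ℚ) : ratE q = Nat.pair (Encodable.encode q.num) q.den := by
  rfl

theorem int_encode_natAbs (z : ℤ) : (Encodable.encode z + 1) / 2 = z.natAbs := by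
  cases z with
  | ofNat n => 
    have : Encodable.encode (Int.ofNat n) = 2 * n := rfl
    rw [this]; simp; omega
  | negSucc n => 
    have : Encodable.encode (Int.negSucc n) = 2 * n + 1 := rfl
    rw [this]; simp; omega

theorem mem_range_ratE (n : ℕ) : n ∈ Set.range ratE ↔
    0 < n.unpair.2 ∧ ∀ x < n.unpair.2 + 1,
      ((n.unpair.1 + 1) / 2 % x = 0 ∧ n.unpair.2 % x = 0) → x = 1 := by
  constructor
  · rintro ⟨q, rfl⟩
    rw [ratE_eq]
    simp only [Nat.unpair_pair, int_encode_natAbs]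
    refine ⟨q.den_pos, fun x _ hx => ?_⟩
    exact Nat.eq_one_of_dvd_coprimes q.reduced (Nat.dvd_of_mod_eq_zero hx.1)
      (Nat.dvd_of_mod_eq_zero hx.2)
  · rintro ⟨h0, h⟩
    set z : ℤ := Denumerable.ofNat ℤ n.unpair.1 with hz
    have hez : Encodable.encode z = n.unpair.1 := Denumerable.encode_ofNat _
    have hc : z.natAbs.Coprime n.unpair.2 := by
      rw [← hez, int_encode_natAbs] at h
      refine h _ ?_ ⟨Nat.mod_eq_zero_of_dvd (Nat.gcd_dvd_left _ _),
        Nat.mod_eq_zero_of_dvd (Nat.gcd_dvd_right _ _)⟩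
      exact Nat.lt_succ_of_le (Nat.gcd_le_right _ h0)
    refine ⟨⟨z, n.unpair.2, h0.ne', hc⟩, ?_⟩
    rw [ratE_eq]
    simp [hez]

theorem primrecPred_range_ratE : PrimrecPred (fun n => n ∈ Set.range ratE) := by
  have hu1 : Primrec (fun n : ℕ => n.unpair.1) := Primrec.fst.comp Primrec.unpair
  have hu2 : Primrec (fun n : ℕ => n.unpair.2) := Primrec.snd.comp Primrec.unpair
  have hk : Primrec (fun n : ℕ => (n.unpair.1 + 1) / 2) :=
    Primrec.nat_div.comp (Primrec.succ.comp hu1) (Primrec.const 2)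
  have hR : PrimrecRel (fun (x n : ℕ) =>
      ¬ ((n.unpair.1 + 1) / 2 % x = 0 ∧ n.unpair.2 % x = 0) ∨ x = 1) := by
    refine PrimrecPred.or (PrimrecPred.not (PrimrecPred.and ?_ ?_)) ?_
    · exact Primrec.eq.comp (Primrec.nat_mod.comp (hk.comp Primrec.snd) Primrec.fst)
        (Primrec.const 0)
    · exact Primrec.eq.comp (Primrec.nat_mod.comp (hu2.comp Primrec.snd) Primrec.fst)
        (Primrec.const 0)
    · exact Primrec.eq.comp Primrec.fst (Primrec.const 1)
  have h2 := (hR.forall_lt).comp (Primrec.succ.comp hu2) Primrec.id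
  have h3 : PrimrecPred (fun n : ℕ => 0 < n.unpair.2) :=
    Primrec.nat_lt.comp (Primrec.const 0) hu2
  refine (h3.and h2).of_eq fun n => ?_
  rw [mem_range_ratE]
  simp only [imp_iff_not_or, id]

theorem infinite_range_ratE : (Set.range ratE).Infinite :=
  Set.infinite_range_of_injective (@Encodable.encode_injective ℚ Rat.instEncodable)

theorem computable_find {α : Type*} [Primcodable α] {p : α → ℕ → Prop} [∀ x, DecidablePred (p x)]
    (hp : Computable₂ (fun x n => decide (p x n))) (h : ∀ x, ∃ n, p x n) :
    Computable (fun x => Nat.find (h x)) := by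
  refine Partrec.of_eq_tot (Partrec.rfind (Computable₂.partrec₂ hp)) fun x => ?_
  rw [Nat.mem_rfind]
  constructor
  · simpa using Nat.find_spec (h x)
  · intro m hm
    simpa using Nat.find_min (h x) hm

theorem exists_ratE (x : ℕ) : ∃ m, x + m + 1 ∈ Set.range ratE := by
  obtain ⟨y, hy, hxy⟩ := infinite_range_ratE.exists_gt x
  exact ⟨y - x - 1, by rwa [show x + (y - x - 1) + 1 = y by omega]⟩

instance ratE_inf : Infinite (Set.range ratE) := infinite_range_ratE.to_subtype

theorem ratE_ofNat : ∃ (d : DecidablePred (· ∈ Set.range ratE)), ∀ n : ℕ, ratE (Denumerable.ofNat ℚ n) =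
    (@Nat.Subtype.ofNat (Set.range ratE) d _ n : ℕ) := by
  let := Rat.instEncodable
  refine ⟨Encodable.decidableRangeEncode ℚ, fun n => ?_⟩
  have : Denumerable.ofNat ℚ n = (Encodable.equivRangeEncode ℚ).symm
      (@Nat.Subtype.ofNat (Set.range ratE) (Encodable.decidableRangeEncode ℚ) _ n) := by
    rfl
  rw [this]
  exact congrArg Subtype.val ((Encodable.equivRangeEncode ℚ).apply_symm_apply _)

theorem computable_ratE : Computable ratE := by
  classical
  obtain ⟨d, hd⟩ := ratE_ofNat
  have key : Computable (fun x : ℕ => Nat.find (exists_ratE x)) := by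
    refine computable_find ?_ _
    have := (primrecPred_range_ratE.comp (Primrec.succ.comp
      (Primrec.nat_add.comp (Primrec.fst (α := ℕ) (β := ℕ)) Primrec.snd)))
    refine (Primrec.to_comp (primrecPred_iff_primrec_decide.1 this)).of_eq fun n => ?_
    rfl
  have hG : Computable (fun n : ℕ => (Nat.rec (ratE (Denumerable.ofNat ℚ 0))
      (fun _ x => (x + Nat.find (exists_ratE x) + 1 : ℕ)) n : ℕ)) := by
    refine Computable.nat_rec Computable.id (Computable.const _) ?_
      (h := fun _ p => p.2 + Nat.find (exists_ratE p.2) + 1)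
    have h2 : Computable (fun p : ℕ × ℕ × ℕ => p.2.2) := Computable.snd.comp Computable.snd
    exact Computable.succ.comp (Primrec.nat_add.to_comp.comp h2 (key.comp h2))
  refine (hG.comp Computable.encode).of_eq fun q => ?_
  have : ∀ n : ℕ, (Nat.rec (ratE (Denumerable.ofNat ℚ 0))
      (fun _ x => (x + Nat.find (exists_ratE x) + 1 : ℕ)) n : ℕ)
      = ratE (Denumerable.ofNat ℚ n) := by
    intro n
    induction n with
    | zero => rfl
    | succ n ih =>
      have h1 : ∀ x y : ℕ, x = y → x + Nat.find (exists_ratE x) + 1 =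
          y + Nat.find (exists_ratE y) + 1 := by
        rintro x _ rfl; rfl
      refine (h1 _ _ (ih.trans (hd n))).trans ?_
      rw [hd (n+1)]
      simp only [Nat.Subtype.ofNat, Nat.Subtype.succ]
  rw [this, Denumerable.ofNat_encode]

theorem computable_natAbs_num : Computable (fun q : ℚ => q.num.natAbs) := by
  have hk : Primrec (fun n : ℕ => (n.unpair.1 + 1) / 2) :=
    Primrec.nat_div.comp (Primrec.succ.comp (Primrec.fst.comp Primrec.unpair)) (Primrec.const 2)
  refine (hk.to_comp.comp computable_ratE).of_eq fun q => ?_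
  simp [ratE_eq, int_encode_natAbs]

theorem computable_den : Computable (fun q : ℚ => q.den) := by
  have hk : Primrec (fun n : ℕ => n.unpair.2) := Primrec.snd.comp Primrec.unpair
  refine (hk.to_comp.comp computable_ratE).of_eq fun q => ?_
  simp [ratE_eq]

theorem rat_le_iff_natAbs {q r : ℚ} (hq : 0 ≤ q) (hr : 0 ≤ r) :
    q ≤ r ↔ q.num.natAbs * r.den ≤ r.num.natAbs * q.den := by
  rw [Rat.le_iff]
  have h1 := Int.natAbs_of_nonneg (Rat.num_nonneg.2 hq)
  have h2 := Int.natAbs_of_nonneg (Rat.num_nonneg.2 hr)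
  zify
  rw [abs_of_nonneg (Rat.num_nonneg.2 hq), abs_of_nonneg (Rat.num_nonneg.2 hr)]

theorem weakly_lce_speedable_implies_lce_speedable (α : ℝ) (hα : α ∈ Set.Ioo (0 : ℝ) 1)
    (ρ : ℚ) (hρ0 : 0 < ρ) (hρ1 : ρ < 1)
    (a b : ℕ → ℚ)
    (ha : IsCompApprox a α) (hamono : Monotone a)
    (hb : IsCompApprox b α) (hbmono : Monotone b)
    (hlim : Filter.liminf
        (fun s => ((|(α - (b s : ℝ)) / (α - (a s : ℝ))| : ℝ) : EReal)) atTop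
        ≤ (((ρ : ℝ) : EReal))) :
    ∃ c : ℕ → ℚ, IsCompApprox c α ∧ Monotone c ∧ IsRhoSpeedable c α ρ := by
  classical
  refine ⟨a, ha, hamono, ?_⟩
  by_cases hq : ∃ q : ℚ, α = (q : ℝ)
  · exact Or.inl hq
  right
  have hle : ∀ c : ℕ → ℚ, IsCompApprox c α → Monotone c → ∀ s, (c s : ℝ) < α := by
    intro c hc hm s
    have hm' : Monotone (fun s => (c s : ℝ)) := fun i j h => by
      simpa using hm h
    exact lt_of_le_of_ne (hm'.ge_of_tendsto hc.2.2 s) fun h => hq ⟨_, h.symm⟩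
  have ha' := hle a ha hamono
  have hb' := hle b hb hbmono
  have hex : ∀ s, ∃ t, s ≤ t ∧ b s ≤ a t := by
    intro s
    have h1 := ha.2.2.eventually (lt_mem_nhds (hb' s))
    obtain ⟨t, ht, hst⟩ := (h1.and (eventually_ge_atTop s)).exists
    exact ⟨t, hst, by exact_mod_cast ht.le⟩
  refine ⟨fun s => Nat.find (hex s), ⟨?_, ?_, ?_⟩, ?_⟩
  · refine computable_find ?_ _
    have hB : Computable (fun p : ℕ × ℕ => b p.1) := hb.1.comp Computable.fst
    have hA : Computable (fun p : ℕ × ℕ => a p.2) := ha.1.comp Computable.snd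
    have hle2 : Computable₂ (fun x y : ℕ => decide (x ≤ y)) :=
      (primrecRel_iff_primrec_decide.1 Primrec.nat_le).to_comp
    have h1 : Computable (fun p : ℕ × ℕ => decide (p.1 ≤ p.2)) :=
      hle2.comp Computable.fst Computable.snd
    have h2 := hle2.comp
      (Primrec.nat_mul.to_comp.comp (computable_natAbs_num.comp hB) (computable_den.comp hA))
      (Primrec.nat_mul.to_comp.comp (computable_natAbs_num.comp hA) (computable_den.comp hB))
    refine ((Primrec.and.to_comp).comp h1 h2).of_eq fun p => ?_
    have h5 := rat_le_iff_natAbs (hb.2.1 p.1).1 (ha.2.1 p.2).1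
    rw [Bool.eq_iff_iff]
    simp only [Bool.and_eq_true, decide_eq_true_eq, h5]
  · intro s t hst
    refine Nat.find_min' _ ?_
    obtain ⟨h1, h2⟩ := Nat.find_spec (hex t)
    exact ⟨hst.trans h1, (hbmono hst).trans h2⟩
  · exact tendsto_atTop_mono (fun s => (Nat.find_spec (hex s)).1) tendsto_id
  · refine le_trans (Filter.liminf_le_liminf (Eventually.of_forall fun s => ?_)) hlim
    rw [EReal.coe_le_coe_iff, abs_div, abs_div]
    have h2 : (b s : ℝ) ≤ a (Nat.find (hex s)) := by exact_mod_cast (Nat.find_spec (hex s)).2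
    have h3 := ha' (Nat.find (hex s))
    have h4 := hb' s
    gcongr ?_ / _
    rw [abs_of_pos (by linarith), abs_of_pos (by linarith)]
    linarith
end
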